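/- Let (X,d) be a proper metric space, ν = (ν₁,…,ν_N) ∈ 𝒫₁(X)^N, λ = (λ₁,…,λ_N) ∈ Δ_N with every λᵢ > 0, and ν* ∈ 𝒫₁(X). Then ν* ∈ Med_λ(ν) if and only if there exist functions ψ₁,…,ψ_N : X → ℝ such that: (1) each ψᵢ is 1-Lipschitz and is a Kantorovich potential between νᵢ and ν*, i.e. W₁(νᵢ,ν*) = ∫ ψᵢ dνᵢ − ∫ ψᵢ dν*; and (2) ∑ᵢ λᵢ ψᵢ ≤ 0 everywhere on X, with ∑ᵢ λᵢ ψᵢ = 0 on the support of ν*. -/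

import Mathlib

open MeasureTheory Filter Topology
open scoped ENNReal NNReal

/-- The set of couplings (transport plans): Borel probability measures on `X × X`
with first marginal `μ` and second marginal `ν`. -/
def Couplings {X : Type*} [MeasurableSpace X] (μ ν : Measure X) :
    Set (Measure (X × X)) :=
  {γ | IsProbabilityMeasure γ ∧ γ.map Prod.fst = μ ∧ γ.map Prod.snd = ν}

/-- The Wasserstein distance of order `1` between two measures on a metric space:
the infimum over couplings `γ` of `∫ d(x,y) dγ`. -/
noncomputable def W1 {X : Type*} [MetricSpace X] [MeasurableSpace X]
    (μ ν : Measure X) : ℝ :=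
  (⨅ γ ∈ Couplings μ ν, ∫⁻ p, edist p.1 p.2 ∂γ).toReal

/-- `𝒫₁(X)`: Borel probability measures on `X` with finite first moment. -/
def P1 (X : Type*) [MetricSpace X] [MeasurableSpace X] : Set (Measure X) :=
  {μ | IsProbabilityMeasure μ ∧ ∀ x₀ : X, Integrable (fun x => dist x₀ x) μ}

/-- `λ` belongs to the simplex `Δ_N`: nonnegative weights summing to `1`. -/
def memSimplex {N : ℕ} (l : Fin N → ℝ) : Prop :=
  (∀ i, 0 ≤ l i) ∧ ∑ i, l i = 1

/-- The dispersion functional `μ ↦ ∑ᵢ λᵢ W₁(νᵢ, μ)`. -/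
noncomputable def medCost {X : Type*} [MetricSpace X] [MeasurableSpace X] {N : ℕ}
    (l : Fin N → ℝ) (ν : Fin N → Measure X) (μ : Measure X) : ℝ :=
  ∑ i, l i * W1 (ν i) μ

/-- The set of Wasserstein medians of `ν₁, …, ν_N` with weights `λ`:
minimizers over `𝒫₁(X)` of the dispersion functional. -/
def Med {X : Type*} [MetricSpace X] [MeasurableSpace X] {N : ℕ}
    (l : Fin N → ℝ) (ν : Fin N → Measure X) : Set (Measure X) :=
  {μ | μ ∈ P1 X ∧ ∀ ρ ∈ P1 X, medCost l ν μ ≤ medCost l ν ρ}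

/-- The (topological) support of a measure: points all of whose neighbourhoods have
positive measure. -/
def msupport {X : Type*} [TopologicalSpace X] [MeasurableSpace X] (μ : Measure X) :
    Set X :=
  {x : X | ∀ U ∈ nhds x, μ U ≠ 0}

/-!
Dual potentials are produced by minimax. Ky Fan's theorem, applied to the Lagrangian of the finite
transport problem, gives Kantorovich duality on finite sets. Moving `μ` and `ν` onto finitely many
points costs only their quantization errors, which tend to zero, so `W1 μ ν` is the supremum of
`∫ f dμ - ∫ f dν` over `1`-Lipschitz `f`; it is attained because the `1`-Lipschitz functions
vanishing at a given point are pointwise compact and integration is continuous on them.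

Let `νstar` minimize `∑ i, l i * W1 (ν i) ρ` over `ρ`, with minimum `V`. Minimality against finitely
supported `ρ` says that every finite convex combination of the inequalities
`V ≤ ∑ i, l i * (∫ ψ i dν i - ψ i x)`, indexed by `x`, has a solution, so by Ky Fan's theorem some
`1`-Lipschitz `ψ i` satisfy all of them. After a translation this reads `∑ i, l i * ψ i ≤ 0` and
`V ≤ ∑ i, l i * ∫ ψ i dν i`, and equality in weak duality at `νstar` (complementary slackness)
forces each `ψ i` to be a Kantorovich potential and `∑ i, l i * ψ i` to vanish
`νstar`-almost everywhere, hence on the support by continuity.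
-/

theorem concaveOn_sum_mul {ι E : Type*} [Fintype ι] [AddCommGroup E] [Module ℝ E] {K : Set E}
    {g : ι → E → ℝ} {w : ι → ℝ} (hK : Convex ℝ K) (hw : ∀ i, 0 ≤ w i)
    (hg : ∀ i, ConcaveOn ℝ K (g i)) : ConcaveOn ℝ K fun x => ∑ i, w i * g i x := by
  refine ⟨hK, fun x hx y hy a b ha hb hab => ?_⟩
  rw [Finset.smul_sum, Finset.smul_sum, ← Finset.sum_add_distrib]
  exact Finset.sum_le_sum fun i _ => ((hg i).smul (hw i)).2 hx hy ha hb hab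

/-- **Ky Fan's theorem** for finite families: take a saddle point of `(w, x) ↦ ∑ i, w i * g i x`
and test it at the vertices of the simplex. -/
theorem exists_forall_le_of_forall_stdSimplex {ι E : Type*} [Fintype ι] [AddCommGroup E]
    [Module ℝ E] [TopologicalSpace E] [IsTopologicalAddGroup E] [ContinuousSMul ℝ E]
    {K : Set E} (hK : IsCompact K) (hne : K.Nonempty) {g : ι → E → ℝ} {c : ℝ}
    (hconc : ∀ i, ConcaveOn ℝ K (g i)) (hcont : ∀ i, ContinuousOn (g i) K)
    (h : ∀ w ∈ stdSimplex ℝ ι, ∃ x ∈ K, c ≤ ∑ i, w i * g i x) :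
    ∃ x ∈ K, ∀ i, c ≤ g i x := by
  classical
  rcases isEmpty_or_nonempty ι with _ | ⟨⟨i₀⟩⟩
  · exact ⟨hne.some, hne.some_mem, isEmptyElim⟩
  have hconvex : Convex ℝ K := (hconc i₀).1
  obtain ⟨w, hw, x, hx, hsaddle⟩ := Sion.exists_isSaddlePointOn
    (f := fun (w : ι → ℝ) x => ∑ i, w i * g i x)
    ⟨_, single_mem_stdSimplex ℝ i₀⟩ (convex_stdSimplex ℝ ι) (isCompact_stdSimplex ℝ ι)
    (fun x _ => Continuous.lowerSemicontinuous (by fun_prop) |>.lowerSemicontinuousOn _)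
    (fun x _ => ConvexOn.quasiconvexOn ⟨convex_stdSimplex ℝ ι, fun w _ w' _ a b _ _ _ => by
      simp only [Pi.add_apply, Pi.smul_apply, smul_eq_mul, add_mul, Finset.sum_add_distrib,
        Finset.mul_sum, mul_assoc, le_refl]⟩)
    hconvex hne hK
    (fun w _ => ContinuousOn.upperSemicontinuousOn
      (continuousOn_finsetSum _ fun i _ => (hcont i).const_mul (w i)))
    (fun w hw => (concaveOn_sum_mul hconvex hw.1 hconc).quasiconcaveOn)
  obtain ⟨y, hy, hcy⟩ := h w hw
  refine ⟨x, hx, fun i => hcy.trans ?_⟩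
  simpa [Pi.single_apply] using hsaddle _ (single_mem_stdSimplex ℝ i) y hy

theorem exists_forall_le_of_forall_finset_stdSimplex {ι E : Type*} [AddCommGroup E]
    [Module ℝ E] [TopologicalSpace E] [IsTopologicalAddGroup E] [ContinuousSMul ℝ E]
    {K : Set E} (hK : IsCompact K) (hne : K.Nonempty) {g : ι → E → ℝ} {c : ℝ}
    (hconc : ∀ i, ConcaveOn ℝ K (g i)) (hcont : ∀ i, ContinuousOn (g i) K)
    (h : ∀ s : Finset ι, ∀ w ∈ stdSimplex ℝ s, ∃ x ∈ K, c ≤ ∑ i, w i * g i x) :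
    ∃ x ∈ K, ∀ i, c ≤ g i x := by
  choose t ht htK using fun i =>
    upperSemicontinuousOn_iff_preimage_Ici.1 (hcont i).upperSemicontinuousOn c
  have hmem {i : ι} {x : E} (hx : x ∈ K) : x ∈ t i ↔ c ≤ g i x := by
    simpa [hx] using (Set.ext_iff.1 (htK i) x).symm
  obtain ⟨x, hx, hxt⟩ := hK.inter_iInter_nonempty t ht fun s => by
    obtain ⟨x, hx, hle⟩ := exists_forall_le_of_forall_stdSimplex hK hne
      (fun i : s => hconc i) (fun i => hcont i) (h s)
    exact ⟨x, hx, Set.mem_iInter₂.2 fun i hi => (hmem hx).2 (hle ⟨i, hi⟩)⟩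
  exact ⟨x, hx, fun i => (hmem hx).1 (Set.mem_iInter.1 hxt i)⟩

section FiniteTransport

variable {ι κ : Type*} [Fintype ι] [Fintype κ] {u : ι → ℝ} {v : κ → ℝ} {c : ι → κ → ℝ} {D : ℝ}

/-- The Lagrangian of the problem of transporting the weights `u` to the weights `v` at cost `c`:
the multipliers `q.1` and `q.2` penalize the failure of the plan `G` to have marginals `u` and
`v`. -/
def transportLagrangian (u : ι → ℝ) (v : κ → ℝ) (c : ι → κ → ℝ) (q : (ι → ℝ) × (κ → ℝ))
    (G : ι × κ → ℝ) : ℝ :=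
  ∑ k, q.1 k * (∑ j, G (k, j) - u k) + ∑ j, q.2 j * (∑ k, G (k, j) - v j) -
    ∑ p, G p * c p.1 p.2

theorem continuous_transportLagrangian (q : (ι → ℝ) × (κ → ℝ)) :
    Continuous (transportLagrangian u v c q) := by
  unfold transportLagrangian
  fun_prop

theorem transportLagrangian_eq (q : (ι → ℝ) × (κ → ℝ)) (G : ι × κ → ℝ) :
    transportLagrangian u v c q G =
      ∑ p, G p * (q.1 p.1 + q.2 p.2 - c p.1 p.2) - (∑ k, u k * q.1 k + ∑ j, v j * q.2 j) := by
  have hrow : ∑ k, q.1 k * ∑ j, G (k, j) = ∑ p : ι × κ, G p * q.1 p.1 := by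
    simp only [Finset.mul_sum, Fintype.sum_prod_type, mul_comm]
  have hcol : ∑ j, q.2 j * ∑ k, G (k, j) = ∑ p : ι × κ, G p * q.2 p.2 := by
    simp only [Finset.mul_sum, Fintype.sum_prod_type_right, mul_comm]
  simp only [transportLagrangian, mul_sub, mul_add, Finset.sum_sub_distrib,
    Finset.sum_add_distrib, hrow, hcol, mul_comm (u _), mul_comm (v _)]
  ring

theorem concaveOn_transportLagrangian (q : (ι → ℝ) × (κ → ℝ)) :
    ConcaveOn ℝ (stdSimplex ℝ (ι × κ)) (transportLagrangian u v c q) := by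
  refine ⟨convex_stdSimplex ℝ _, fun G _ G' _ a b _ _ hab => le_of_eq ?_⟩
  simp only [transportLagrangian_eq, Pi.add_apply, Pi.smul_apply, smul_eq_mul, add_mul,
    Finset.sum_add_distrib, mul_assoc, ← Finset.mul_sum]
  linear_combination -(∑ k, u k * q.1 k + ∑ j, v j * q.2 j) * hab

theorem sum_mul_transportLagrangian {σ : Type*} [Fintype σ] {w : σ → ℝ} (hw : ∑ i, w i = 1)
    (q : σ → (ι → ℝ) × (κ → ℝ)) (G : ι × κ → ℝ) :
    ∑ i, w i * transportLagrangian u v c (q i) G =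
      transportLagrangian u v c (∑ i, w i • q i) G := by
  have hfst : ∑ i, w i * ∑ k, (q i).1 k * (∑ j, G (k, j) - u k) =
      ∑ k, (∑ i, w i * (q i).1 k) * (∑ j, G (k, j) - u k) := by
    simp only [Finset.mul_sum, Finset.sum_mul, mul_assoc]
    exact Finset.sum_comm
  have hsnd : ∑ i, w i * ∑ j, (q i).2 j * (∑ k, G (k, j) - v j) =
      ∑ j, (∑ i, w i * (q i).2 j) * (∑ k, G (k, j) - v j) := by
    simp only [Finset.mul_sum, Finset.sum_mul, mul_assoc]
    exact Finset.sum_comm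
  simp only [transportLagrangian, mul_sub (w _), mul_add (w _), Finset.sum_sub_distrib,
    Finset.sum_add_distrib, hfst, hsnd, ← Finset.sum_mul, hw, one_mul, Prod.fst_sum,
    Prod.snd_sum, Prod.smul_fst, Prod.smul_snd, Finset.sum_apply, Pi.smul_apply, smul_eq_mul]

/-- Lowering `q.1` by the largest constraint violation makes `q` admissible, and the plan
concentrated where the violation is largest pays exactly for it. -/
theorem exists_neg_le_transportLagrangian (hu : u ∈ stdSimplex ℝ ι) (hv : v ∈ stdSimplex ℝ κ)
    (hD : ∀ (a : ι → ℝ) (b : κ → ℝ), (∀ k j, a k + b j ≤ c k j) →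
      ∑ k, u k * a k + ∑ j, v j * b j ≤ D)
    (q : (ι → ℝ) × (κ → ℝ)) :
    ∃ G ∈ stdSimplex ℝ (ι × κ), -D ≤ transportLagrangian u v c q G := by
  classical
  have : Nonempty ι := not_isEmpty_iff.1 fun _ => by simp [stdSimplex] at hu
  have : Nonempty κ := not_isEmpty_iff.1 fun _ => by simp [stdSimplex] at hv
  obtain ⟨p₀, hp₀⟩ := Finite.exists_max fun p : ι × κ => q.1 p.1 + q.2 p.2 - c p.1 p.2
  set m := q.1 p₀.1 + q.2 p₀.2 - c p₀.1 p₀.2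
  refine ⟨_, single_mem_stdSimplex ℝ p₀, ?_⟩
  have hle := hD (fun k => q.1 k - m) q.2 fun k j => by linarith [hp₀ (k, j)]
  simp only [mul_sub, Finset.sum_sub_distrib, ← Finset.sum_mul, hu.2, one_mul] at hle
  rw [transportLagrangian_eq, Fintype.sum_eq_single p₀ fun p hp => by simp [hp], Pi.single_eq_same]
  linarith

theorem eq_zero_of_forall_le_mul_sub {x r s : ℝ} (h : ∀ t : ℝ, s ≤ t * x - r) : x = 0 := by
  by_contra hx
  have := h ((s + r - 1) / x)
  rw [div_mul_cancel₀ _ hx] at this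
  linarith

/-- **Kantorovich duality** on finite sets: as the multipliers are unbounded, a plan at which all
Lagrangian values are at least `-D` satisfies the marginal constraints. -/
theorem exists_transportPlan_cost_le (hu : u ∈ stdSimplex ℝ ι) (hv : v ∈ stdSimplex ℝ κ)
    (hD : ∀ (a : ι → ℝ) (b : κ → ℝ), (∀ k j, a k + b j ≤ c k j) →
      ∑ k, u k * a k + ∑ j, v j * b j ≤ D) :
    ∃ G ∈ stdSimplex ℝ (ι × κ), (∀ k, ∑ j, G (k, j) = u k) ∧ (∀ j, ∑ k, G (k, j) = v j) ∧
      ∑ p, G p * c p.1 p.2 ≤ D := by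
  classical
  obtain ⟨G₀, hG₀, -⟩ := exists_neg_le_transportLagrangian hu hv hD 0
  obtain ⟨G, hG, hle⟩ := exists_forall_le_of_forall_finset_stdSimplex
    (isCompact_stdSimplex ℝ (ι × κ)) ⟨G₀, hG₀⟩ (g := transportLagrangian u v c) (c := -D)
    concaveOn_transportLagrangian (fun q => (continuous_transportLagrangian q).continuousOn)
    fun s w hw => by
      simpa only [sum_mul_transportLagrangian hw.2] using
        exists_neg_le_transportLagrangian hu hv hD _
  have heq_zero {x : ℝ} (hx : ∀ t, -D ≤ t * x - ∑ p, G p * c p.1 p.2) : x = 0 :=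
    eq_zero_of_forall_le_mul_sub hx
  refine ⟨G, hG, fun k => sub_eq_zero.1 (heq_zero fun t => ?_),
    fun j => sub_eq_zero.1 (heq_zero fun t => ?_), ?_⟩
  · simpa [transportLagrangian, Pi.single_apply] using hle (Pi.single k t, 0)
  · simpa [transportLagrangian, Pi.single_apply] using hle (0, Pi.single j t)
  · simpa [transportLagrangian] using hle 0

end FiniteTransport

section BlockCoupling

open ProbabilityTheory

variable {X ι : Type*} [MeasurableSpace X] {μ ν : Measure X} {t s : X → ι}

theorem cond_preimage_singleton_apply [MeasurableSpace ι] [MeasurableSingletonClass ι]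
    [DecidableEq ι] [IsFiniteMeasure μ] (ht : Measurable t)
    {k : ι} (hk : μ (t ⁻¹' {k}) ≠ 0) (k' : ι) :
    μ[t ⁻¹' {k'} | t ⁻¹' {k}] = if k = k' then 1 else 0 := by
  split_ifs with h
  · rw [← h, cond_apply_self hk (measure_ne_top μ _)]
  · have : t ⁻¹' {k} ∩ t ⁻¹' {k'} = ∅ :=
      (Disjoint.preimage t (Set.disjoint_singleton.2 h)).inter_eq
    rw [cond_apply (ht (measurableSet_singleton k)), this, measure_empty, mul_zero]

variable [Fintype ι] {G : ι × ι → ℝ≥0∞}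

/-- The measure on `X × X` that puts mass `G (k, j)` on the block `t ⁻¹' {k} ×ˢ s ⁻¹' {j}`,
distributed there as the product of the conditional laws of `μ` and `ν`. -/
noncomputable def blockCoupling (μ ν : Measure X) (t s : X → ι) (G : ι × ι → ℝ≥0∞) :
    Measure (X × X) :=
  ∑ q, G q • (μ[|t ⁻¹' {q.1}]).prod (ν[|s ⁻¹' {q.2}])

theorem map_swap_blockCoupling :
    (blockCoupling μ ν t s G).map Prod.swap = blockCoupling ν μ s t (G ∘ Prod.swap) := by
  simp only [blockCoupling, Measure.map_finset_sum' measurable_swap.aemeasurable,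
    Measure.map_smul, Measure.prod_swap]
  exact Fintype.sum_equiv (Equiv.prodComm ι ι) _ _ fun q => rfl

variable [MeasurableSpace ι] [MeasurableSingletonClass ι]

theorem map_fst_blockCoupling [IsFiniteMeasure μ] [IsFiniteMeasure ν] (ht : Measurable t)
    (hrow : ∀ k, ∑ j, G (k, j) = μ (t ⁻¹' {k})) (hcol : ∀ j, ∑ k, G (k, j) = ν (s ⁻¹' {j})) :
    (blockCoupling μ ν t s G).map Prod.fst = μ := by
  have hcond (q : ι × ι) : G q * ν[Set.univ | s ⁻¹' {q.2}] = G q := by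
    rcases eq_or_ne (ν (s ⁻¹' {q.2})) 0 with h | h
    · rw [Finset.sum_eq_zero_iff.1 ((hcol q.2).trans h) q.1 (Finset.mem_univ _), zero_mul]
    · have := cond_isProbabilityMeasure h
      rw [measure_univ, mul_one]
  calc (blockCoupling μ ν t s G).map Prod.fst
      = ∑ q : ι × ι, G q • μ[|t ⁻¹' {q.1}] := by
        simp only [blockCoupling, Measure.map_finset_sum' measurable_fst.aemeasurable,
          Measure.map_smul, Measure.map_fst_prod, smul_smul, hcond]
    _ = ∑ k, μ (t ⁻¹' {k}) • μ[|t ⁻¹' {k}] := by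
        simp only [Fintype.sum_prod_type, ← Finset.sum_smul, hrow]
    _ = μ := sum_meas_smul_cond_fiber ht μ

theorem map_snd_blockCoupling [IsFiniteMeasure μ] [IsFiniteMeasure ν] (hs : Measurable s)
    (hrow : ∀ k, ∑ j, G (k, j) = μ (t ⁻¹' {k})) (hcol : ∀ j, ∑ k, G (k, j) = ν (s ⁻¹' {j})) :
    (blockCoupling μ ν t s G).map Prod.snd = ν := by
  have hsnd : (Prod.snd : X × X → X) = Prod.fst ∘ Prod.swap := rfl
  rw [hsnd, ← Measure.map_map measurable_fst measurable_swap, map_swap_blockCoupling]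
  exact map_fst_blockCoupling hs hcol hrow

theorem blockCoupling_mem_Couplings [IsProbabilityMeasure μ] [IsFiniteMeasure ν]
    (ht : Measurable t) (hs : Measurable s) (hrow : ∀ k, ∑ j, G (k, j) = μ (t ⁻¹' {k}))
    (hcol : ∀ j, ∑ k, G (k, j) = ν (s ⁻¹' {j})) :
    blockCoupling μ ν t s G ∈ Couplings μ ν := by
  have hfst := map_fst_blockCoupling ht hrow hcol
  refine ⟨?_, hfst, map_snd_blockCoupling hs hrow hcol⟩
  have : IsProbabilityMeasure ((blockCoupling μ ν t s G).map Prod.fst) := by rwa [hfst]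
  exact Measure.isProbabilityMeasure_of_map Prod.fst

theorem blockCoupling_prod_preimage [IsFiniteMeasure μ] [IsFiniteMeasure ν]
    (ht : Measurable t) (hs : Measurable s) (hrow : ∀ k, ∑ j, G (k, j) = μ (t ⁻¹' {k}))
    (hcol : ∀ j, ∑ k, G (k, j) = ν (s ⁻¹' {j})) (q : ι × ι) :
    blockCoupling μ ν t s G ((t ⁻¹' {q.1}) ×ˢ (s ⁻¹' {q.2})) = G q := by
  classical
  have hmass (r : ι × ι) : G r * (μ[t ⁻¹' {q.1} | t ⁻¹' {r.1}] * ν[s ⁻¹' {q.2} | s ⁻¹' {r.2}]) =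
      if r = q then G r else 0 := by
    rcases eq_or_ne (G r) 0 with h | h
    · simp [h]
    · have hμ : μ (t ⁻¹' {r.1}) ≠ 0 := fun h0 =>
        h (Finset.sum_eq_zero_iff.1 ((hrow r.1).trans h0) r.2 (Finset.mem_univ _))
      have hν : ν (s ⁻¹' {r.2}) ≠ 0 := fun h0 =>
        h (Finset.sum_eq_zero_iff.1 ((hcol r.2).trans h0) r.1 (Finset.mem_univ _))
      simp [cond_preimage_singleton_apply ht hμ, cond_preimage_singleton_apply hs hν,
        Prod.ext_iff, ← ite_and, and_comm]
  simp [blockCoupling, Measure.prod_prod, hmass]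

theorem lintegral_blockCoupling [IsFiniteMeasure μ] [IsFiniteMeasure ν]
    (ht : Measurable t) (hs : Measurable s) (hrow : ∀ k, ∑ j, G (k, j) = μ (t ⁻¹' {k}))
    (hcol : ∀ j, ∑ k, G (k, j) = ν (s ⁻¹' {j})) (c : ι × ι → ℝ≥0∞) :
    ∫⁻ x, c (t x.1, s x.2) ∂blockCoupling μ ν t s G = ∑ q, c q * G q := by
  have hts : Measurable (Prod.map t s) := ht.prodMap hs
  have hblock (q : ι × ι) : Prod.map t s ⁻¹' {q} = (t ⁻¹' {q.1}) ×ˢ (s ⁻¹' {q.2}) := by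
    rw [← Set.preimage_prod_map_prod, Set.singleton_prod_singleton]
  calc ∫⁻ x, c (t x.1, s x.2) ∂blockCoupling μ ν t s G
      = ∫⁻ q, c q ∂(blockCoupling μ ν t s G).map (Prod.map t s) :=
        (lintegral_map (measurable_of_countable c) hts).symm
    _ = ∑ q, c q * G q := by
        simp only [lintegral_fintype, Measure.map_apply hts (measurableSet_singleton _), hblock,
          blockCoupling_prod_preimage ht hs hrow hcol]

end BlockCoupling

section Wasserstein

variable {X : Type*} [MetricSpace X] [MeasurableSpace X] [BorelSpace X] {μ ν : Measure X}

theorem integrable_of_lipschitzWith (hμ : μ ∈ P1 X) {K : ℝ≥0} {f : X → ℝ}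
    (hf : LipschitzWith K f) : Integrable f μ := by
  have := hμ.1
  obtain ⟨x₀⟩ : Nonempty X := nonempty_of_isProbabilityMeasure μ
  refine ((integrable_const ‖f x₀‖).add ((hμ.2 x₀).const_mul K)).mono'
    hf.continuous.aestronglyMeasurable (ae_of_all _ fun x => ?_)
  calc ‖f x‖ ≤ ‖f x₀‖ + dist (f x₀) (f x) := by
        rw [dist_eq_norm]; exact norm_le_norm_add_norm_sub _ _
    _ ≤ ‖f x₀‖ + K * dist x₀ x := by gcongr; exact hf.dist_le_mul x₀ x

theorem prod_mem_Couplings {X : Type*} [MeasurableSpace X] (μ ν : Measure X)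
    [IsProbabilityMeasure μ] [IsProbabilityMeasure ν] : μ.prod ν ∈ Couplings μ ν :=
  ⟨inferInstance, by simp, by simp⟩

theorem W1_le_of_mem_Couplings {X : Type*} [MetricSpace X] [MeasurableSpace X]
    {μ ν : Measure X} {γ : Measure (X × X)} (hγ : γ ∈ Couplings μ ν) {C : ℝ}
    (hC : 0 ≤ C) (h : ∫⁻ q, edist q.1 q.2 ∂γ ≤ ENNReal.ofReal C) : W1 μ ν ≤ C :=
  ENNReal.toReal_le_of_le_ofReal hC (iInf₂_le_of_le γ hγ h)

theorem Couplings.integrable_dist_fst_snd [SecondCountableTopology X] (hμ : μ ∈ P1 X)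
    (hν : ν ∈ P1 X) {γ : Measure (X × X)} (hγ : γ ∈ Couplings μ ν) :
    Integrable (fun q : X × X => dist q.1 q.2) γ := by
  obtain ⟨-, rfl, rfl⟩ := hγ
  have := hμ.1
  obtain ⟨x₀⟩ : Nonempty X := nonempty_of_isProbabilityMeasure (γ.map Prod.fst)
  exact (((hμ.2 x₀).comp_measurable measurable_fst).add
    ((hν.2 x₀).comp_measurable measurable_snd)).mono' continuous_dist.aestronglyMeasurable
    (ae_of_all _ fun q => (Real.norm_of_nonneg dist_nonneg).trans_le (dist_triangle_left _ _ _))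

theorem Couplings.integral_sub_integral_le (hμ : μ ∈ P1 X) (hν : ν ∈ P1 X) {γ : Measure (X × X)}
    (hγ : γ ∈ Couplings μ ν) {f : X → ℝ} (hf : LipschitzWith 1 f) :
    ENNReal.ofReal (∫ x, f x ∂μ - ∫ x, f x ∂ν) ≤ ∫⁻ q, edist q.1 q.2 ∂γ := by
  have hfμ := integrable_of_lipschitzWith hμ hf
  have hfν := integrable_of_lipschitzWith hν hf
  obtain ⟨-, rfl, rfl⟩ := hγ
  calc ENNReal.ofReal (∫ x, f x ∂γ.map Prod.fst - ∫ x, f x ∂γ.map Prod.snd)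
      = ENNReal.ofReal (∫ q, (f q.1 - f q.2) ∂γ) := by
        rw [integral_map measurable_fst.aemeasurable hfμ.1,
          integral_map measurable_snd.aemeasurable hfν.1,
          ← integral_sub (f := fun q : X × X => f q.1) (g := fun q : X × X => f q.2)
            (hfμ.comp_measurable measurable_fst) (hfν.comp_measurable measurable_snd)]
    _ ≤ ‖∫ q, (f q.1 - f q.2) ∂γ‖ₑ := Real.ofReal_le_enorm _
    _ ≤ ∫⁻ q, ‖f q.1 - f q.2‖ₑ ∂γ := enorm_integral_le_lintegral_enorm _
    _ ≤ ∫⁻ q, edist q.1 q.2 ∂γ := lintegral_mono fun q => by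
        simpa [edist_eq_enorm_sub] using hf q.1 q.2

theorem integral_sub_integral_le_W1 [SecondCountableTopology X] (hμ : μ ∈ P1 X) (hν : ν ∈ P1 X)
    {f : X → ℝ} (hf : LipschitzWith 1 f) : ∫ x, f x ∂μ - ∫ x, f x ∂ν ≤ W1 μ ν := by
  have := hμ.1
  have := hν.1
  have hprod := prod_mem_Couplings μ ν
  have hfin : ⨅ γ ∈ Couplings μ ν, ∫⁻ q, edist q.1 q.2 ∂γ ≠ ∞ := by
    refine ne_top_of_le_ne_top ?_ (iInf₂_le _ hprod)
    simp only [edist_dist]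
    exact (Couplings.integrable_dist_fst_snd hμ hν hprod).lintegral_lt_top.ne
  rw [W1, ← ENNReal.ofReal_le_iff_le_toReal hfin]
  exact le_iInf₂ fun γ hγ => Couplings.integral_sub_integral_le hμ hν hγ hf

end Wasserstein

section Quantization

variable {X ι : Type*} [MetricSpace X] [MeasurableSpace X] [BorelSpace X]
  [MeasurableSpace ι] [MeasurableSingletonClass ι] {μ ν : Measure X} {t : X → ι} {p : ι → X}

theorem integrable_comp_of_finite [Finite ι] {X : Type*} [MeasurableSpace X] {μ : Measure X}
    [IsFiniteMeasure μ] {t : X → ι} (ht : Measurable t) (g : ι → ℝ) :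
    Integrable (fun x => g (t x)) μ :=
  Integrable.of_finite.comp_measurable ht

theorem integral_comp_eq_sum [Fintype ι] {X : Type*} [MeasurableSpace X] {μ : Measure X}
    [IsFiniteMeasure μ] {t : X → ι} (ht : Measurable t) (g : ι → ℝ) :
    ∫ x, g (t x) ∂μ = ∑ k, μ.real (t ⁻¹' {k}) * g k := by
  rw [← integral_map ht.aemeasurable (measurable_of_countable g).aestronglyMeasurable,
    integral_fintype .of_finite]
  simp [map_measureReal_apply ht]

theorem integrable_dist_quantization [Finite ι] [SecondCountableTopology X] (hμ : μ ∈ P1 X)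
    (ht : Measurable t) (p : ι → X) : Integrable (fun x => dist (p (t x)) x) μ := by
  have := hμ.1
  obtain ⟨x₀⟩ : Nonempty X := nonempty_of_isProbabilityMeasure μ
  refine ((integrable_comp_of_finite ht fun k => dist (p k) x₀).add (hμ.2 x₀)).mono'
    (((measurable_of_countable p).comp ht).dist measurable_id).aestronglyMeasurable
    (ae_of_all _ fun x => ?_)
  exact (Real.norm_of_nonneg dist_nonneg).trans_le (dist_triangle _ _ _)

theorem dist_integral_quantization_le [Finite ι] [SecondCountableTopology X] (hμ : μ ∈ P1 X)
    (ht : Measurable t) {f : X → ℝ} (hf : LipschitzWith 1 f) :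
    dist (∫ x, f (p (t x)) ∂μ) (∫ x, f x ∂μ) ≤ ∫ x, dist (p (t x)) x ∂μ := by
  have := hμ.1
  rw [dist_eq_norm, ← integral_sub (integrable_comp_of_finite ht fun k => f (p k))
    (integrable_of_lipschitzWith hμ hf)]
  refine norm_integral_le_of_norm_le (integrable_dist_quantization hμ ht p)
    (ae_of_all _ fun x => ?_)
  simpa [dist_eq_norm] using hf.dist_le_mul (p (t x)) x

theorem exists_lipschitzWith_of_add_le_dist {X ι : Type*} [PseudoMetricSpace X] [Finite ι]
    [Nonempty ι] {p : ι → X} {a b : ι → ℝ} (h : ∀ k j, a k + b j ≤ dist (p k) (p j)) :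
    ∃ ψ : X → ℝ, LipschitzWith 1 ψ ∧ (∀ k, a k ≤ ψ (p k)) ∧ ∀ j, ψ (p j) ≤ -b j := by
  cases nonempty_fintype ι
  refine ⟨fun x => Finset.univ.inf' Finset.univ_nonempty fun j => dist x (p j) - b j,
    LipschitzWith.of_le_add fun x y => ?_, fun k => ?_, fun j => ?_⟩
  · obtain ⟨j, -, hj⟩ := Finset.exists_mem_eq_inf' Finset.univ_nonempty fun j => dist y (p j) - b j
    rw [hj]
    refine (Finset.inf'_le _ (Finset.mem_univ j)).trans ?_
    linarith [dist_triangle x y (p j)]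
  · exact Finset.le_inf' _ _ fun j _ => by linarith [h k j]
  · exact (Finset.inf'_le _ (Finset.mem_univ j)).trans_eq (by rw [dist_self, zero_sub])

theorem sum_mul_le_of_forall_lipschitzWith [Fintype ι] [SecondCountableTopology X] (hμ : μ ∈ P1 X)
    (hν : ν ∈ P1 X) (ht : Measurable t) {D : ℝ}
    (hD : ∀ f : X → ℝ, LipschitzWith 1 f → ∫ x, f x ∂μ - ∫ x, f x ∂ν ≤ D) {a b : ι → ℝ}
    (hab : ∀ k j, a k + b j ≤ dist (p k) (p j)) :
    ∑ k, μ.real (t ⁻¹' {k}) * a k + ∑ j, ν.real (t ⁻¹' {j}) * b j ≤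
      D + (∫ x, dist (p (t x)) x ∂μ + ∫ x, dist (p (t x)) x ∂ν) := by
  have := hμ.1
  have := hν.1
  have : Nonempty ι := (nonempty_of_isProbabilityMeasure μ).map t
  obtain ⟨ψ, hψ, ha, hb⟩ := exists_lipschitzWith_of_add_le_dist hab
  have hμ' := (abs_le.1 (dist_integral_quantization_le (p := p) hμ ht hψ)).2
  have hν' := (abs_le.1 (dist_integral_quantization_le (p := p) hν ht hψ)).1
  calc ∑ k, μ.real (t ⁻¹' {k}) * a k + ∑ j, ν.real (t ⁻¹' {j}) * b j
      ≤ ∑ k, μ.real (t ⁻¹' {k}) * ψ (p k) + ∑ j, ν.real (t ⁻¹' {j}) * -ψ (p j) := by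
        gcongr with k _ j _
        · exact ha k
        · linarith [hb j]
    _ = ∫ x, ψ (p (t x)) ∂μ - ∫ x, ψ (p (t x)) ∂ν := by
        simp only [integral_comp_eq_sum ht fun k => ψ (p k), mul_neg, Finset.sum_neg_distrib,
          sub_eq_add_neg]
    _ ≤ D + (∫ x, dist (p (t x)) x ∂μ + ∫ x, dist (p (t x)) x ∂ν) := by
        linarith [hD ψ hψ]

theorem lintegral_edist_le_quantization [Finite ι] [SecondCountableTopology X] (hμ : μ ∈ P1 X)
    (hν : ν ∈ P1 X) (ht : Measurable t) {γ : Measure (X × X)} (hγ : γ ∈ Couplings μ ν) :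
    ∫⁻ q, edist q.1 q.2 ∂γ ≤ ENNReal.ofReal (∫ x, dist (p (t x)) x ∂μ) +
      ∫⁻ q, edist (p (t q.1)) (p (t q.2)) ∂γ + ENNReal.ofReal (∫ x, dist (p (t x)) x ∂ν) := by
  have hdist (ρ : Measure X) (hρ : ρ ∈ P1 X) :
      ENNReal.ofReal (∫ x, dist (p (t x)) x ∂ρ) = ∫⁻ x, edist (p (t x)) x ∂ρ := by
    simp only [edist_dist, ofReal_integral_eq_lintegral_ofReal
      (integrable_dist_quantization hρ ht p) (ae_of_all _ fun _ => dist_nonneg)]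
  have hpt : Measurable fun x => p (t x) := (measurable_of_countable p).comp ht
  have hmeas : Measurable fun x => edist (p (t x)) x := hpt.edist measurable_id
  rw [hdist μ hμ, hdist ν hν]
  obtain ⟨-, rfl, rfl⟩ := hγ
  rw [lintegral_map hmeas measurable_fst, lintegral_map hmeas measurable_snd,
    ← lintegral_add_left (f := fun q : X × X => edist (p (t q.1)) q.1)
      (hmeas.comp measurable_fst),
    ← lintegral_add_right (g := fun q : X × X => edist (p (t q.2)) q.2) _
      (hmeas.comp measurable_snd)]
  refine lintegral_mono fun q => ?_
  have := edist_triangle4 q.1 (p (t q.1)) (p (t q.2)) q.2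
  rwa [edist_comm q.1 (p (t q.1))] at this

theorem W1_le_of_transportPlan [Fintype ι] [SecondCountableTopology X] (hμ : μ ∈ P1 X)
    (hν : ν ∈ P1 X) (ht : Measurable t) (p : ι → X) {G : ι × ι → ℝ} (hG : ∀ q, 0 ≤ G q)
    (hrow : ∀ k, ∑ j, G (k, j) = μ.real (t ⁻¹' {k}))
    (hcol : ∀ j, ∑ k, G (k, j) = ν.real (t ⁻¹' {j})) :
    W1 μ ν ≤ ∫ x, dist (p (t x)) x ∂μ + ∑ q, G q * dist (p q.1) (p q.2) +
      ∫ x, dist (p (t x)) x ∂ν := by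
  have := hμ.1
  have := hν.1
  have hrow' (k : ι) : ∑ j, ENNReal.ofReal (G (k, j)) = μ (t ⁻¹' {k}) := by
    rw [← ENNReal.ofReal_sum_of_nonneg fun j _ => hG _, hrow, ofReal_measureReal]
  have hcol' (j : ι) : ∑ k, ENNReal.ofReal (G (k, j)) = ν (t ⁻¹' {j}) := by
    rw [← ENNReal.ofReal_sum_of_nonneg fun k _ => hG _, hcol, ofReal_measureReal]
  have hγ := blockCoupling_mem_Couplings (G := fun q => ENNReal.ofReal (G q)) ht ht hrow' hcol'
  have hsum : 0 ≤ ∑ q, G q * dist (p q.1) (p q.2) :=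
    Finset.sum_nonneg fun q _ => mul_nonneg (hG q) dist_nonneg
  have hcost : ∑ q, edist (p q.1) (p q.2) * ENNReal.ofReal (G q) =
      ENNReal.ofReal (∑ q, G q * dist (p q.1) (p q.2)) := by
    simp only [edist_dist, ← ENNReal.ofReal_mul dist_nonneg, mul_comm (dist _ _),
      ENNReal.ofReal_sum_of_nonneg fun q _ => mul_nonneg (hG q) dist_nonneg]
  have hδ : 0 ≤ ∫ x, dist (p (t x)) x ∂μ := integral_nonneg fun x => dist_nonneg
  have hε : 0 ≤ ∫ x, dist (p (t x)) x ∂ν := integral_nonneg fun x => dist_nonneg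
  refine W1_le_of_mem_Couplings hγ (by positivity)
    ((lintegral_edist_le_quantization (p := p) hμ hν ht hγ).trans_eq ?_)
  rw [lintegral_blockCoupling ht ht hrow' hcol' fun q => edist (p q.1) (p q.2), hcost,
    ENNReal.ofReal_add (add_nonneg hδ hsum) hε, ENNReal.ofReal_add hδ hsum]

theorem real_preimage_singleton_mem_stdSimplex [Fintype ι] {X : Type*} [MeasurableSpace X]
    (μ : Measure X) [IsProbabilityMeasure μ] {t : X → ι} (ht : Measurable t) :
    (fun k => μ.real (t ⁻¹' {k})) ∈ stdSimplex ℝ ι :=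
  ⟨fun k => measureReal_nonneg, by simpa using (integral_comp_eq_sum (μ := μ) ht 1).symm⟩

theorem W1_le_add_quantization [Finite ι] [SecondCountableTopology X] (hμ : μ ∈ P1 X)
    (hν : ν ∈ P1 X) (ht : Measurable t) (p : ι → X) {D : ℝ}
    (hD : ∀ f : X → ℝ, LipschitzWith 1 f → ∫ x, f x ∂μ - ∫ x, f x ∂ν ≤ D) :
    W1 μ ν ≤ D + 2 * (∫ x, dist (p (t x)) x ∂μ + ∫ x, dist (p (t x)) x ∂ν) := by
  have := hμ.1
  have := hν.1
  cases nonempty_fintype ι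
  obtain ⟨G, hG, hrow, hcol, hcost⟩ := exists_transportPlan_cost_le
    (real_preimage_singleton_mem_stdSimplex μ ht) (real_preimage_singleton_mem_stdSimplex ν ht)
    fun a b => sum_mul_le_of_forall_lipschitzWith hμ hν ht hD
  linarith [W1_le_of_transportPlan hμ hν ht p hG.1 hrow hcol]

end Quantization

section KantorovichRubinstein

variable {X : Type*} [MetricSpace X] [MeasurableSpace X] [BorelSpace X]
  [SecondCountableTopology X] {μ ν : Measure X}

theorem exists_simpleFunc_tendsto_integral_dist (X : Type*) [MetricSpace X] [MeasurableSpace X]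
    [BorelSpace X] [SecondCountableTopology X] [Nonempty X] :
    ∃ T : ℕ → SimpleFunc X X, ∀ μ ∈ P1 X,
      Tendsto (fun n => ∫ x, dist (T n x) x ∂μ) atTop (𝓝 0) := by
  inhabit X
  let T := SimpleFunc.approxOn id measurable_id Set.univ (default : X) trivial
  refine ⟨T, fun μ hμ => ?_⟩
  have hle (n : ℕ) (x : X) : dist (T n x) x ≤ dist default x := by
    have := SimpleFunc.edist_approxOn_le measurable_id (Set.mem_univ (default : X)) x n
    rwa [id, edist_dist, edist_dist, ENNReal.ofReal_le_ofReal_iff dist_nonneg] at this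
  have hlim (x : X) : Tendsto (fun n => dist (T n x) x) atTop (𝓝 0) :=
    tendsto_iff_dist_tendsto_zero.1 <|
      SimpleFunc.tendsto_approxOn measurable_id (Set.mem_univ default) (by simp)
  simpa using tendsto_integral_of_dominated_convergence (dist default)
    (fun n => ((T n).measurable.dist measurable_id).aestronglyMeasurable) (hμ.2 default)
    (fun n => ae_of_all _ fun x => (Real.norm_of_nonneg dist_nonneg).trans_le (hle n x))
    (ae_of_all _ hlim)

theorem W1_le_of_forall_lipschitzWith (hμ : μ ∈ P1 X) (hν : ν ∈ P1 X) {D : ℝ}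
    (hD : ∀ f : X → ℝ, LipschitzWith 1 f → ∫ x, f x ∂μ - ∫ x, f x ∂ν ≤ D) : W1 μ ν ≤ D := by
  have := hμ.1
  have : Nonempty X := nonempty_of_isProbabilityMeasure μ
  obtain ⟨T, hT⟩ := exists_simpleFunc_tendsto_integral_dist X
  have hlim : Tendsto (fun n => D + 2 * (∫ x, dist (T n x) x ∂μ + ∫ x, dist (T n x) x ∂ν)) atTop
      (𝓝 D) := by
    simpa using (((hT μ hμ).add (hT ν hν)).const_mul 2).const_add D
  refine ge_of_tendsto' hlim fun n => ?_
  have ht : Measurable fun x => (⟨T n x, (T n).mem_range_self x⟩ : (T n).range) :=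
    (T n).measurable.subtype_mk
  exact W1_le_add_quantization hμ hν ht Subtype.val hD

/-- The `1`-Lipschitz functions vanishing at `x₀`: since potentials matter only up to additive
constants, this is a compact convex set of candidate Kantorovich potentials, for the topology of
pointwise convergence. -/
def normalizedLipschitz {X : Type*} [MetricSpace X] (x₀ : X) : Set (X → ℝ) :=
  {f | LipschitzWith 1 f ∧ f x₀ = 0}

theorem zero_mem_normalizedLipschitz {X : Type*} [MetricSpace X] (x₀ : X) :
    0 ∈ normalizedLipschitz x₀ :=
  ⟨LipschitzWith.const' 0, rfl⟩

theorem sub_const_mem_normalizedLipschitz {X : Type*} [MetricSpace X] {f : X → ℝ}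
    (hf : LipschitzWith 1 f) (x₀ : X) : (fun x => f x - f x₀) ∈ normalizedLipschitz x₀ :=
  ⟨by simpa using hf.sub (LipschitzWith.const (f x₀)), sub_self _⟩

theorem convex_normalizedLipschitz {X : Type*} [MetricSpace X] (x₀ : X) :
    Convex ℝ (normalizedLipschitz x₀) := by
  intro f hf g hg a b ha hb hab
  refine ⟨LipschitzWith.of_le_add fun x y => ?_, by simp [hf.2, hg.2]⟩
  calc a * f x + b * g x ≤ a * (f y + dist x y) + b * (g y + dist x y) := by
        gcongr
        · simpa using hf.1.le_add_mul x y
        · simpa using hg.1.le_add_mul x y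
    _ = a * f y + b * g y + dist x y := by linear_combination dist x y * hab

theorem isCompact_normalizedLipschitz {X : Type*} [MetricSpace X] (x₀ : X) :
    IsCompact (normalizedLipschitz x₀) := by
  refine (isCompact_univ_pi fun x => isCompact_closedBall (0 : ℝ) (dist x x₀)).of_isClosed_subset
    ((isClosed_setOfPred_lipschitzWith 1).inter
      (isClosed_eq (continuous_apply x₀) continuous_const)) fun f hf x _ => ?_
  simpa [hf.2] using hf.1.dist_le_mul x x₀

theorem continuousOn_integral_lipschitzWith (hμ : μ ∈ P1 X) :
    ContinuousOn (fun f : X → ℝ => ∫ x, f x ∂μ) {f | LipschitzWith 1 f} := by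
  have := hμ.1
  have : Nonempty X := nonempty_of_isProbabilityMeasure μ
  obtain ⟨T, hT⟩ := exists_simpleFunc_tendsto_integral_dist X
  have ht (n : ℕ) : Measurable fun x => (⟨T n x, (T n).mem_range_self x⟩ : (T n).range) :=
    (T n).measurable.subtype_mk
  have happrox : TendstoUniformlyOn (fun n (f : X → ℝ) => ∫ x, f (T n x) ∂μ)
      (fun f => ∫ x, f x ∂μ) atTop {f | LipschitzWith 1 f} :=
    Metric.tendstoUniformlyOn_iff.2 fun ε hε =>
      ((hT μ hμ).eventually_lt_const hε).mono fun n hn f hf =>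
        (dist_comm _ _).trans_lt <|
          (dist_integral_quantization_le (p := Subtype.val) hμ (ht n) hf).trans_lt hn
  refine happrox.continuousOn (Frequently.of_forall fun n => ?_)
  have hsum (f : X → ℝ) : ∫ x, f (T n x) ∂μ = _ :=
    integral_comp_eq_sum (ht n) fun k => f k
  simp only [hsum]
  fun_prop

/-- A Kantorovich potential between `μ` and `ν`: a `1`-Lipschitz function attaining the supremum
in the Kantorovich–Rubinstein formula. -/
def IsKantorovichPotential {X : Type*} [MetricSpace X] [MeasurableSpace X] (μ ν : Measure X)
    (ψ : X → ℝ) : Prop :=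
  LipschitzWith 1 ψ ∧ W1 μ ν = ∫ x, ψ x ∂μ - ∫ x, ψ x ∂ν

theorem exists_isKantorovichPotential (hμ : μ ∈ P1 X) (hν : ν ∈ P1 X) (x₀ : X) :
    ∃ ψ ∈ normalizedLipschitz x₀, IsKantorovichPotential μ ν ψ := by
  have := hμ.1
  have := hν.1
  have hcont : ContinuousOn (fun f : X → ℝ => ∫ x, f x ∂μ - ∫ x, f x ∂ν)
      (normalizedLipschitz x₀) :=
    ((continuousOn_integral_lipschitzWith hμ).sub (continuousOn_integral_lipschitzWith hν)).mono
      fun f hf => hf.1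
  obtain ⟨ψ, hψ, hmax⟩ := (isCompact_normalizedLipschitz x₀).exists_isMaxOn
    ⟨0, zero_mem_normalizedLipschitz x₀⟩ hcont
  refine ⟨ψ, hψ, hψ.1, le_antisymm (W1_le_of_forall_lipschitzWith hμ hν fun f hf => ?_)
    (integral_sub_integral_le_W1 hμ hν hψ.1)⟩
  have hfμ := integrable_of_lipschitzWith hμ hf
  have hfν := integrable_of_lipschitzWith hν hf
  have hconst : ∫ x, (f x - f x₀) ∂μ - ∫ x, (f x - f x₀) ∂ν = ∫ x, f x ∂μ - ∫ x, f x ∂ν := by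
    simp [integral_sub hfμ (integrable_const _), integral_sub hfν (integrable_const _)]
  exact hconst.ge.trans (hmax (sub_const_mem_normalizedLipschitz hf x₀))

end KantorovichRubinstein

section WeightedDirac

variable {X ι : Type*} [MeasurableSpace X] [Fintype ι]

/-- The finitely supported measure with mass `w j` at the point `p j`. The weights are meant to be
nonnegative: negative ones are truncated to `0`. -/
noncomputable def weightedDirac (w : ι → ℝ) (p : ι → X) : Measure X :=
  ∑ j, ENNReal.ofReal (w j) • Measure.dirac (p j)

theorem integrable_weightedDirac [MeasurableSingletonClass X] (w : ι → ℝ) (p : ι → X)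
    (f : X → ℝ) : Integrable f (weightedDirac w p) :=
  integrable_finsetSum_measure.2 fun _ _ =>
    (integrable_dirac enorm_lt_top).smul_measure ENNReal.ofReal_ne_top

theorem integral_weightedDirac [MeasurableSingletonClass X] {w : ι → ℝ} (hw : ∀ j, 0 ≤ w j)
    (p : ι → X) (f : X → ℝ) : ∫ x, f x ∂weightedDirac w p = ∑ j, w j * f (p j) := by
  rw [weightedDirac, integral_finsetSum_measure
    (integrable_finsetSum_measure.1 (integrable_weightedDirac w p f))]
  simp [integral_smul_measure, ENNReal.toReal_ofReal (hw _)]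

theorem weightedDirac_mem_P1 {X : Type*} [MetricSpace X] [MeasurableSpace X]
    [MeasurableSingletonClass X] {w : ι → ℝ} (hw : w ∈ stdSimplex ℝ ι) (p : ι → X) :
    weightedDirac w p ∈ P1 X := by
  refine ⟨⟨?_⟩, fun x₀ => integrable_weightedDirac w p _⟩
  simp [weightedDirac, ← ENNReal.ofReal_sum_of_nonneg fun j _ => hw.1 j, hw.2]

end WeightedDirac

section Median

variable {X : Type*} [MetricSpace X] [MeasurableSpace X] [BorelSpace X] {N : ℕ} {l : Fin N → ℝ}
  {ν : Fin N → Measure X} {ρ : Measure X} {ψ : Fin N → X → ℝ}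

theorem integrable_sum_mul_of_lipschitzWith (l : Fin N → ℝ) (hρ : ρ ∈ P1 X)
    (hψ : ∀ i, LipschitzWith 1 (ψ i)) : Integrable (fun x => ∑ i, l i * ψ i x) ρ :=
  integrable_finsetSum _ fun i _ => (integrable_of_lipschitzWith hρ (hψ i)).const_mul (l i)

theorem sum_mul_integral_sub_integral (l : Fin N → ℝ) (ν : Fin N → Measure X) (hρ : ρ ∈ P1 X)
    (hψ : ∀ i, LipschitzWith 1 (ψ i)) :
    ∑ i, l i * (∫ x, ψ i x ∂ν i - ∫ x, ψ i x ∂ρ) =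
      ∑ i, l i * ∫ x, ψ i x ∂ν i - ∫ x, ∑ i, l i * ψ i x ∂ρ := by
  rw [integral_finsetSum _ fun i _ => (integrable_of_lipschitzWith hρ (hψ i)).const_mul (l i)]
  simp only [integral_const_mul, mul_sub, Finset.sum_sub_distrib]

theorem sum_mul_integral_sub_le_medCost [SecondCountableTopology X] (hl : ∀ i, 0 ≤ l i)
    (hν : ∀ i, ν i ∈ P1 X) (hρ : ρ ∈ P1 X) (hψ : ∀ i, LipschitzWith 1 (ψ i)) :
    ∑ i, l i * ∫ x, ψ i x ∂ν i - ∫ x, ∑ i, l i * ψ i x ∂ρ ≤ medCost l ν ρ := by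
  rw [← sum_mul_integral_sub_integral l ν hρ hψ]
  exact Finset.sum_le_sum fun i _ =>
    mul_le_mul_of_nonneg_left (integral_sub_integral_le_W1 (hν i) hρ (hψ i)) (hl i)

theorem medCost_eq_of_isKantorovichPotential (l : Fin N → ℝ) (hρ : ρ ∈ P1 X)
    (hψ : ∀ i, IsKantorovichPotential (ν i) ρ (ψ i)) :
    medCost l ν ρ = ∑ i, l i * ∫ x, ψ i x ∂ν i - ∫ x, ∑ i, l i * ψ i x ∂ρ := by
  rw [← sum_mul_integral_sub_integral l ν hρ fun i => (hψ i).1]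
  simp only [medCost, (hψ _).2]

theorem concaveOn_sum_mul_integral_sub (l : Fin N → ℝ) (hν : ∀ i, ν i ∈ P1 X) (x₀ x : X) :
    ConcaveOn ℝ (Set.univ.pi fun _ => normalizedLipschitz x₀) fun φ : Fin N → X → ℝ =>
      ∑ i, l i * (∫ y, φ i y ∂ν i - φ i x) := by
  refine ⟨convex_pi fun _ _ => convex_normalizedLipschitz x₀,
    fun φ hφ φ' hφ' a b _ _ _ => le_of_eq ?_⟩
  have hintegral (i : Fin N) : ∫ y, (a * φ i y + b * φ' i y) ∂ν i =
      a * ∫ y, φ i y ∂ν i + b * ∫ y, φ' i y ∂ν i := by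
    rw [integral_add
      ((integrable_of_lipschitzWith (hν i) (hφ i (Set.mem_univ i)).1).const_mul a)
      ((integrable_of_lipschitzWith (hν i) (hφ' i (Set.mem_univ i)).1).const_mul b),
      integral_const_mul, integral_const_mul]
  simp only [Pi.add_apply, Pi.smul_apply, smul_eq_mul, hintegral, Finset.mul_sum,
    ← Finset.sum_add_distrib]
  exact Finset.sum_congr rfl fun i _ => by ring

variable [SecondCountableTopology X]

theorem continuousOn_sum_mul_integral_sub (l : Fin N → ℝ) (hν : ∀ i, ν i ∈ P1 X) (x₀ x : X) :
    ContinuousOn (fun φ : Fin N → X → ℝ => ∑ i, l i * (∫ y, φ i y ∂ν i - φ i x))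
      (Set.univ.pi fun _ => normalizedLipschitz x₀) := by
  refine continuousOn_finsetSum _ fun i _ => ContinuousOn.const_mul ?_ _
  refine ContinuousOn.sub ?_ (by fun_prop)
  exact (continuousOn_integral_lipschitzWith (hν i)).comp (continuous_apply i).continuousOn
    fun φ hφ => (hφ i (Set.mem_univ i)).1

/-- Ky Fan's theorem over the points of `X`: a convex combination of the inequalities at finitely
many points is the dual objective at the corresponding finitely supported measure. -/
theorem exists_lipschitzWith_forall_le_sum_mul_integral_sub (hν : ∀ i, ν i ∈ P1 X) {V : ℝ}
    (hV : ∀ ρ ∈ P1 X, V ≤ medCost l ν ρ) :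
    ∃ ψ : Fin N → X → ℝ, (∀ i, LipschitzWith 1 (ψ i)) ∧
      ∀ x, V ≤ ∑ i, l i * (∫ y, ψ i y ∂ν i - ψ i x) := by
  rcases isEmpty_or_nonempty X with _ | ⟨⟨x₀⟩⟩
  · exact ⟨0, fun _ => LipschitzWith.const' 0, isEmptyElim⟩
  have hfinite (s : Finset X) (w : s → ℝ) (hw : w ∈ stdSimplex ℝ s) :
      ∃ φ ∈ Set.univ.pi fun _ : Fin N => normalizedLipschitz x₀,
        V ≤ ∑ x, w x * ∑ i, l i * (∫ y, φ i y ∂ν i - φ i x) := by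
    have hρ := weightedDirac_mem_P1 hw (Subtype.val : s → X)
    choose φ hφ hpot using fun i => exists_isKantorovichPotential (hν i) hρ x₀
    refine ⟨φ, fun i _ => hφ i, (hV _ hρ).trans_eq ?_⟩
    rw [medCost_eq_of_isKantorovichPotential l hρ hpot, integral_weightedDirac hw.1]
    simp only [mul_sub, Finset.sum_sub_distrib, ← Finset.sum_mul, hw.2, one_mul]
  obtain ⟨ψ, hψ, hle⟩ := exists_forall_le_of_forall_finset_stdSimplex
    (isCompact_univ_pi fun _ => isCompact_normalizedLipschitz x₀)
    ⟨0, fun _ _ => zero_mem_normalizedLipschitz x₀⟩ (concaveOn_sum_mul_integral_sub l hν x₀)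
    (continuousOn_sum_mul_integral_sub l hν x₀) hfinite
  exact ⟨ψ, fun i => (hψ i (Set.mem_univ i)).1, hle⟩

theorem exists_lipschitzWith_sum_mul_nonpos (hl : ∑ i, l i = 1)
    (hν : ∀ i, ν i ∈ P1 X) {V : ℝ} (hV : ∀ ρ ∈ P1 X, V ≤ medCost l ν ρ) :
    ∃ ψ : Fin N → X → ℝ, (∀ i, LipschitzWith 1 (ψ i)) ∧ (∀ x, ∑ i, l i * ψ i x ≤ 0) ∧
      V ≤ ∑ i, l i * ∫ x, ψ i x ∂ν i := by
  obtain ⟨φ, hφ, hle⟩ := exists_lipschitzWith_forall_le_sum_mul_integral_sub hν hV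
  set C := ∑ i, l i * ∫ x, φ i x ∂ν i
  have hintegral (i : Fin N) : ∫ x, (φ i x - (C - V)) ∂ν i = ∫ x, φ i x ∂ν i - (C - V) := by
    have := (hν i).1
    simp [integral_sub (integrable_of_lipschitzWith (hν i) (hφ i)) (integrable_const _)]
  refine ⟨fun i x => φ i x - (C - V),
    fun i => by simpa using (hφ i).sub (LipschitzWith.const (C - V)), fun x => ?_, ?_⟩
  · have := hle x
    simp only [mul_sub, Finset.sum_sub_distrib, ← Finset.sum_mul, hl] at this ⊢
    linarith
  · simp only [hintegral, mul_sub, Finset.sum_sub_distrib, ← Finset.sum_mul, hl]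
    linarith

end Median

section Support

variable {X : Type*} [TopologicalSpace X] [MeasurableSpace X] {μ : Measure X} {f : X → ℝ}

theorem eq_zero_of_mem_msupport (hf : Continuous f) (hnonpos : ∀ x, f x ≤ 0)
    (hintegral : Integrable f μ) (h : ∫ x, f x ∂μ = 0) {x : X} (hx : x ∈ msupport μ) : f x = 0 := by
  have hae : -f =ᵐ[μ] 0 := (integral_eq_zero_iff_of_nonneg
    (fun x => neg_nonneg.2 (hnonpos x)) hintegral.neg).1 (by simp [integral_neg, h])
  by_contra hne
  refine hx _ ((isOpen_ne_fun hf continuous_const).mem_nhds hne) ?_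
  simpa [Filter.EventuallyEq, ae_iff] using hae

theorem msupport_eq_support (μ : Measure X) : msupport μ = μ.support := by
  ext x
  simp [msupport, Measure.mem_support_iff_forall, pos_iff_ne_zero]

theorem integral_eq_zero_of_forall_mem_msupport [HereditarilyLindelofSpace X]
    (h : ∀ x ∈ msupport μ, f x = 0) : ∫ x, f x ∂μ = 0 := by
  rw [msupport_eq_support] at h
  exact integral_eq_zero_of_ae (mem_of_superset Measure.support_mem_ae h)

end Support

section Optimality

variable {X : Type*} [MetricSpace X] [MeasurableSpace X] [BorelSpace X]
  [SecondCountableTopology X] {N : ℕ} {l : Fin N → ℝ} {ν : Fin N → Measure X}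
  {νstar : Measure X}

theorem isKantorovichPotential_of_medCost_le {ρ : Measure X} {ψ : Fin N → X → ℝ}
    (hl : ∀ i, 0 ≤ l i) (hν : ∀ i, ν i ∈ P1 X) (hρ : ρ ∈ P1 X) (hψ : ∀ i, LipschitzWith 1 (ψ i))
    (h : medCost l ν ρ ≤ ∑ i, l i * ∫ x, ψ i x ∂ν i - ∫ x, ∑ i, l i * ψ i x ∂ρ)
    {i : Fin N} (hi : l i ≠ 0) : IsKantorovichPotential (ν i) ρ (ψ i) := by
  have hle (j : Fin N) : l j * (∫ x, ψ j x ∂ν j - ∫ x, ψ j x ∂ρ) ≤ l j * W1 (ν j) ρ :=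
    mul_le_mul_of_nonneg_left (integral_sub_integral_le_W1 (hν j) hρ (hψ j)) (hl j)
  rw [← sum_mul_integral_sub_integral l ν hρ hψ] at h
  have heq := (Finset.sum_eq_sum_iff_of_le fun j _ => hle j).1
    ((Finset.sum_le_sum fun j _ => hle j).antisymm h) i (Finset.mem_univ i)
  exact ⟨hψ i, (mul_left_cancel₀ hi heq).symm⟩

/-- Where `l i = 0`, the dual problem says nothing about `ψ i`, which is replaced by any
Kantorovich potential. -/
theorem exists_isKantorovichPotential_of_medCost_le {ρ : Measure X} {ψ : Fin N → X → ℝ}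
    (hl : ∀ i, 0 ≤ l i) (hν : ∀ i, ν i ∈ P1 X) (hρ : ρ ∈ P1 X) (hψ : ∀ i, LipschitzWith 1 (ψ i))
    (h : medCost l ν ρ ≤ ∑ i, l i * ∫ x, ψ i x ∂ν i - ∫ x, ∑ i, l i * ψ i x ∂ρ) :
    ∃ φ : Fin N → X → ℝ, (∀ i, IsKantorovichPotential (ν i) ρ (φ i)) ∧
      ∀ x, ∑ i, l i * φ i x = ∑ i, l i * ψ i x := by
  have := hρ.1
  obtain ⟨x₀⟩ : Nonempty X := nonempty_of_isProbabilityMeasure ρ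
  have hex (i : Fin N) : ∃ φ, IsKantorovichPotential (ν i) ρ φ ∧ ∀ x, l i * φ x = l i * ψ i x := by
    rcases eq_or_ne (l i) 0 with hi | hi
    · obtain ⟨φ, -, hφ⟩ := exists_isKantorovichPotential (hν i) hρ x₀
      exact ⟨φ, hφ, by simp [hi]⟩
    · exact ⟨ψ i, isKantorovichPotential_of_medCost_le hl hν hρ hψ h hi, fun _ => rfl⟩
  choose φ hφ heq using hex
  exact ⟨φ, hφ, fun x => Finset.sum_congr rfl fun i _ => heq i x⟩

theorem exists_isKantorovichPotential_of_mem_Med (hl : memSimplex l) (hν : ∀ i, ν i ∈ P1 X)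
    (hmed : νstar ∈ Med l ν) :
    ∃ ψ : Fin N → X → ℝ, (∀ i, IsKantorovichPotential (ν i) νstar (ψ i)) ∧
      (∀ x, ∑ i, l i * ψ i x ≤ 0) ∧ ∀ x ∈ msupport νstar, ∑ i, l i * ψ i x = 0 := by
  obtain ⟨hνstar, hmin⟩ := hmed
  obtain ⟨φ, hφ, hnonpos, hle⟩ := exists_lipschitzWith_sum_mul_nonpos hl.2 hν hmin
  have hweak := sum_mul_integral_sub_le_medCost hl.1 hν hνstar hφ
  have hzero : ∫ x, ∑ i, l i * φ i x ∂νstar = 0 :=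
    le_antisymm (integral_nonpos hnonpos) (by linarith)
  obtain ⟨ψ, hψ, heq⟩ := exists_isKantorovichPotential_of_medCost_le hl.1 hν hνstar hφ
    (by linarith)
  refine ⟨ψ, hψ, fun x => (heq x).trans_le (hnonpos x), fun x hx => (heq x).trans ?_⟩
  have hcont : Continuous fun x => ∑ i, l i * φ i x :=
    continuous_finsetSum _ fun i _ => (hφ i).continuous.const_mul (l i)
  exact eq_zero_of_mem_msupport hcont hnonpos
    (integrable_sum_mul_of_lipschitzWith l hνstar hφ) hzero hx

theorem mem_Med_of_isKantorovichPotential {ψ : Fin N → X → ℝ} (hl : ∀ i, 0 ≤ l i)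
    (hν : ∀ i, ν i ∈ P1 X) (hνstar : νstar ∈ P1 X)
    (hψ : ∀ i, IsKantorovichPotential (ν i) νstar (ψ i)) (hnonpos : ∀ x, ∑ i, l i * ψ i x ≤ 0)
    (hzero : ∀ x ∈ msupport νstar, ∑ i, l i * ψ i x = 0) : νstar ∈ Med l ν := by
  refine ⟨hνstar, fun ρ hρ => ?_⟩
  calc medCost l ν νstar = ∑ i, l i * ∫ x, ψ i x ∂ν i := by
        rw [medCost_eq_of_isKantorovichPotential l hνstar hψ,
          integral_eq_zero_of_forall_mem_msupport hzero, sub_zero]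
    _ ≤ ∑ i, l i * ∫ x, ψ i x ∂ν i - ∫ x, ∑ i, l i * ψ i x ∂ρ := by
        linarith [integral_nonpos (μ := ρ) hnonpos]
    _ ≤ medCost l ν ρ := sum_mul_integral_sub_le_medCost hl hν hρ fun i => (hψ i).1

end Optimality

theorem median_optimality_conditions_general
    {X : Type*} [MetricSpace X] [SecondCountableTopology X] [MeasurableSpace X] [BorelSpace X]
    {N : ℕ} {l : Fin N → ℝ} (hl : memSimplex l) {ν : Fin N → Measure X} (hν : ∀ i, ν i ∈ P1 X)
    {νstar : Measure X} (hνstar : νstar ∈ P1 X) :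
    νstar ∈ Med l ν ↔
      ∃ ψ : Fin N → X → ℝ,
        (∀ i, IsKantorovichPotential (ν i) νstar (ψ i)) ∧
        (∀ x : X, ∑ i, l i * ψ i x ≤ 0) ∧
        (∀ x ∈ msupport νstar, ∑ i, l i * ψ i x = 0) :=
  ⟨exists_isKantorovichPotential_of_mem_Med hl hν, fun ⟨_, hψ, hnonpos, hzero⟩ =>
    mem_Med_of_isKantorovichPotential hl.1 hν hνstar hψ hnonpos hzero⟩

/-- Optimality conditions for Wasserstein medians: `ν* ∈ Med_λ(ν)` iff
there are `1`-Lipschitz Kantorovich potentials `ψᵢ` between `νᵢ` and `ν*`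
(`W₁(νᵢ,ν*) = ∫ ψᵢ dνᵢ − ∫ ψᵢ dν*`) with `∑ᵢ λᵢ ψᵢ ≤ 0` on `X` and `∑ᵢ λᵢ ψᵢ = 0`
on the support of `ν*`. -/
theorem median_optimality_conditions
    {X : Type*} [MetricSpace X] [ProperSpace X] [MeasurableSpace X] [BorelSpace X]
    {N : ℕ} (hN : 1 ≤ N) {l : Fin N → ℝ} (hl : memSimplex l)
    (hlpos : ∀ i, 0 < l i) {ν : Fin N → Measure X} (hν : ∀ i, ν i ∈ P1 X)
    {νstar : Measure X} (hνstar : νstar ∈ P1 X) :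
    νstar ∈ Med l ν ↔
      ∃ ψ : Fin N → X → ℝ,
        (∀ i, LipschitzWith 1 (ψ i) ∧
          W1 (ν i) νstar = ∫ x, ψ i x ∂(ν i) - ∫ x, ψ i x ∂νstar) ∧
        (∀ x : X, ∑ i, l i * ψ i x ≤ 0) ∧
        (∀ x ∈ msupport νstar, ∑ i, l i * ψ i x = 0) :=
  median_optimality_conditions_general hl hν hνstar
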